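/- Equivalence of LBV and MLL+mix: (i) if the sequent ⊢ P is provable in MLL+mix, then the structure ⟨P⟩ is provable in LBV; (ii) if a structure P in normal form with P ≠ ◦ is provable in LBV, then the sequent ⊢ ⌊P⌋ is provable in MLL+mix. -/

import Mathlib

/-!
The deep-inference system LBV (the `BV`-free core system of the calculus of
structures of Guglielmi).  Structures are built from the unit `◦`, atoms `a`
and negated atoms `ā` by par `[P,Q]` and copar `(P,Q)`, and are identified
modulo the congruence generated by associativity, commutativity and the
unit laws `[P,◦]=P`, `(P,◦)=P`.  The rules `ai↓`, `s` (and the atomic cut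
`ai↑`) apply inside an arbitrary one-hole context and modulo the
equivalence.
-/

namespace LBV

/-- Structures: the unit `◦`, atoms, negated atoms, par `[P,Q]` and
copar `(P,Q)`. -/
inductive St : Type where
  | unit : St
  | pos  : ℕ → St
  | neg  : ℕ → St
  | par  : St → St → St
  | cop  : St → St → St
deriving DecidableEq

/-- Negation: `¬◦ = ◦`, `¬[P,Q] = (¬P,¬Q)`, `¬(P,Q) = [¬P,¬Q]`, `¬¬P = P`. -/
def St.negS : St → St
  | .unit => .unit
  | .pos a => .neg a
  | .neg a => .pos a
  | .par P Q => .cop P.negS Q.negS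
  | .cop P Q => .par P.negS Q.negS

/-- Atoms are the propositional symbols and their negations. -/
def St.isAtom : St → Prop
  | .pos _ => True
  | .neg _ => True
  | _ => False

/-- Syntactic equivalence of structures: the smallest congruence generated
by associativity and commutativity of par and copar and the unit laws
`[P,◦]=P` and `(P,◦)=P`. -/
inductive Equiv : St → St → Prop where
  | refl (P : St) : Equiv P P
  | symm {P Q : St} : Equiv P Q → Equiv Q P
  | trans {P Q R : St} : Equiv P Q → Equiv Q R → Equiv P R
  | parComm (P Q : St) : Equiv (.par P Q) (.par Q P)
  | copComm (P Q : St) : Equiv (.cop P Q) (.cop Q P)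
  | parAssoc (P Q R : St) : Equiv (.par (.par P Q) R) (.par P (.par Q R))
  | copAssoc (P Q R : St) : Equiv (.cop (.cop P Q) R) (.cop P (.cop Q R))
  | parUnit (P : St) : Equiv (.par P .unit) P
  | copUnit (P : St) : Equiv (.cop P .unit) P
  | parCongr {P P' Q Q' : St} :
      Equiv P P' → Equiv Q Q' → Equiv (.par P Q) (.par P' Q')
  | copCongr {P P' Q Q' : St} :
      Equiv P P' → Equiv Q Q' → Equiv (.cop P Q) (.cop P' Q')

/-- One-hole contexts. -/
inductive Ctx : Type where
  | hole : Ctx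
  | parL : Ctx → St → Ctx
  | parR : St → Ctx → Ctx
  | copL : Ctx → St → Ctx
  | copR : St → Ctx → Ctx

/-- Plugging a structure into the hole of a context. -/
def Ctx.fill : Ctx → St → St
  | .hole, P => P
  | .parL C Q, P => .par (C.fill P) Q
  | .parR Q C, P => .par Q (C.fill P)
  | .copL C Q, P => .cop (C.fill P) Q
  | .copR Q C, P => .cop Q (C.fill P)

/-- Names of the rules: interaction `ai↓`, co-interaction (atomic cut)
`ai↑`, and switch `s`. -/
inductive Rule : Type where
  | aiDown | aiUp | s
deriving DecidableEq

/-- The rules read at the root of a structure (premise on the left,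
conclusion on the right). -/
inductive RootStep : Rule → St → St → Prop where
  | aiDown (A : St) (h : A.isAtom) : RootStep .aiDown .unit (.par A A.negS)
  | aiUp (A : St) (h : A.isAtom) : RootStep .aiUp (.cop A A.negS) .unit
  | s (P Q R : St) : RootStep .s (.cop P (.par Q R)) (.par (.cop P Q) R)

/-- One inference step using a rule from the set `Rs`, applied inside an
arbitrary context and modulo the equivalence. -/
def Step (Rs : Set Rule) (P Q : St) : Prop :=
  ∃ r ∈ Rs, ∃ (C : Ctx) (P' Q' : St),
    RootStep r P' Q' ∧ Equiv P (C.fill P') ∧ Equiv (C.fill Q') Q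

/-- Derivations over an arbitrary step relation: a finite sequence of rule
instances from the premise to the conclusion (modulo the equivalence). -/
inductive Deriv (Stp : St → St → Prop) : St → St → Prop where
  | eqv {P Q : St} : Equiv P Q → Deriv Stp P Q
  | step {P Q R : St} : Stp P Q → Deriv Stp Q R → Deriv Stp P R

/-- The rules of the system LBV. -/
def LBVRules : Set Rule := {.aiDown, .s}

/-- Derivations in LBV. -/
def DerivLBV (P Q : St) : Prop := Deriv (Step LBVRules) P Q

/-- A proof of `Q` in LBV is a derivation from the unit `◦` to `Q`. -/
def ProofLBV (Q : St) : Prop := DerivLBV .unit Q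

end LBV

namespace LBV

/-- Formulas of MLL+mix: atoms, negated atoms, tensor `⊗` and par `⅋`. -/
inductive MF : Type where
  | pos    : ℕ → MF
  | negA   : ℕ → MF
  | tensor : MF → MF → MF
  | parr   : MF → MF → MF
deriving DecidableEq

/-- Negation of MLL formulas, by the De Morgan laws. -/
def MF.neg : MF → MF
  | .pos a => .negA a
  | .negA a => .pos a
  | .tensor P Q => .parr P.neg Q.neg
  | .parr P Q => .tensor P.neg Q.neg

/-- Provability of one-sided sequents in MLL+mix. -/
inductive MProof : List MF → Prop where
  | id (P : MF) : MProof [P, P.neg]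
  | perm (Γ Δ : List MF) (P Q : MF) :
      MProof (Γ ++ P :: Q :: Δ) → MProof (Γ ++ Q :: P :: Δ)
  | tensor (Γ Δ : List MF) (P Q : MF) :
      MProof (Γ ++ [P]) → MProof (Q :: Δ) →
      MProof (Γ ++ Δ ++ [P.tensor Q])
  | parr (Γ : List MF) (P Q : MF) :
      MProof (Γ ++ [P, Q]) → MProof (Γ ++ [P.parr Q])
  | mix (Γ Δ : List MF) : MProof Γ → MProof Δ → MProof (Γ ++ Δ)

/-- The translation `⟨·⟩` from MLL+mix formulas to LBV structures. -/
def MF.toSt : MF → St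
  | .pos a => .pos a
  | .negA a => .neg a
  | .tensor P Q => .cop P.toSt Q.toSt
  | .parr P Q => .par P.toSt Q.toSt

/-- A structure is `◦`-free (no unit occurrences); together with `P ≠ ◦`
this captures structures in normal form. -/
def St.unitFree : St → Prop
  | .unit => False
  | .pos _ => True
  | .neg _ => True
  | .par P Q => P.unitFree ∧ Q.unitFree
  | .cop P Q => P.unitFree ∧ Q.unitFree

/-- The translation `⌊·⌋` from `◦`-free LBV structures to MLL+mix formulas
(the value on the unit is irrelevant junk). -/
def St.toMF : St → MF
  | .unit => .pos 0
  | .pos a => .pos a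
  | .neg a => .negA a
  | .par P Q => .parr P.toMF Q.toMF
  | .cop P Q => .tensor P.toMF Q.toMF

/-!
From MLL+mix to LBV, a sequent is read as the par of its formulas. Two switches simulate the tensor
rule, and the same simulation reduces the identity axiom to atomic interactions.

The converse amounts to a cut elimination, because the LBV rules act deep inside a structure. It is
obtained semantically, following Okada. A submonoid `S` of a commutative monoid is the pole of a
phase space in which `S` is its own orthogonal; this self-duality interprets the unit `◦`, and all
the rules of the calculus, the cut `ai↑` included, become inclusions of facts. In the phase space
of sequents whose pole consists of the provable sequents and the empty one, every sequent `Γ` in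
the denotation of a `◦`-free structure `P` satisfies `⊢ Γ, ⌊P⌋`. If `P` is provable, then its
denotation contains the pole, hence the empty sequent.
-/

open scoped Pointwise

/-! ### Derivations in LBV -/

lemma Equiv.unit_par (P : St) : Equiv (.par .unit P) P := (Equiv.parComm _ _).trans (.parUnit P)

lemma Equiv.unit_cop (P : St) : Equiv (.cop .unit P) P := (Equiv.copComm _ _).trans (.copUnit P)

lemma Equiv.par_left_comm (P Q R : St) : Equiv (.par P (.par Q R)) (.par Q (.par P R)) :=
  (Equiv.parAssoc P Q R).symm.trans
    ((Equiv.parCongr (.parComm P Q) (.refl R)).trans (.parAssoc Q P R))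

lemma Equiv.fill {P Q : St} (h : Equiv P Q) : ∀ C : Ctx, Equiv (C.fill P) (C.fill Q)
  | .hole => h
  | .parL C R => .parCongr (h.fill C) (.refl R)
  | .parR R C => .parCongr (.refl R) (h.fill C)
  | .copL C R => .copCongr (h.fill C) (.refl R)
  | .copR R C => .copCongr (.refl R) (h.fill C)

/-- Composition of contexts: `C.comp D` is `C` with `D` in place of its hole. -/
def Ctx.comp : Ctx → Ctx → Ctx
  | .hole, D => D
  | .parL C R, D => .parL (C.comp D) R
  | .parR R C, D => .parR R (C.comp D)
  | .copL C R, D => .copL (C.comp D) R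
  | .copR R C, D => .copR R (C.comp D)

lemma Ctx.fill_comp (C D : Ctx) (P : St) : (C.comp D).fill P = C.fill (D.fill P) := by
  induction C <;> simp only [comp, fill, *]

section Derivations

variable {Rs : Set Rule} {P Q R : St}

lemma Step.of_rootStep {r : Rule} (hr : r ∈ Rs) (h : RootStep r P Q) : Step Rs P Q :=
  ⟨r, hr, .hole, P, Q, h, .refl P, .refl Q⟩

lemma Step.equiv_trans (h : Equiv P Q) : Step Rs Q R → Step Rs P R
  | ⟨r, hr, C, Q', R', hroot, hQ, hR⟩ => ⟨r, hr, C, Q', R', hroot, h.trans hQ, hR⟩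

lemma Step.fill (C : Ctx) : Step Rs P Q → Step Rs (C.fill P) (C.fill Q)
  | ⟨r, hr, D, P', Q', hroot, hP, hQ⟩ =>
    ⟨r, hr, C.comp D, P', Q', hroot, C.fill_comp D P' ▸ hP.fill C, C.fill_comp D Q' ▸ hQ.fill C⟩

lemma Deriv.equiv_trans (h : Equiv P Q) : Deriv (Step Rs) Q R → Deriv (Step Rs) P R
  | .eqv h' => .eqv (h.trans h')
  | .step s d => .step (s.equiv_trans h) d

lemma Deriv.trans (d : Deriv (Step Rs) P Q) (e : Deriv (Step Rs) Q R) : Deriv (Step Rs) P R := by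
  induction d with
  | eqv h => exact e.equiv_trans h
  | step s _ ih => exact .step s (ih e)

lemma Deriv.trans_equiv (d : Deriv (Step Rs) P Q) (h : Equiv Q R) : Deriv (Step Rs) P R :=
  d.trans (.eqv h)

lemma Deriv.fill (C : Ctx) (d : Deriv (Step Rs) P Q) : Deriv (Step Rs) (C.fill P) (C.fill Q) := by
  induction d with
  | eqv h => exact .eqv (h.fill C)
  | step s _ ih => exact .step (s.fill C) ih

lemma Deriv.of_rootStep {r : Rule} (hr : r ∈ Rs) (h : RootStep r P Q) : Deriv (Step Rs) P Q :=
  .step (.of_rootStep hr h) (.eqv (.refl Q))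

lemma Deriv.par (d : Deriv (Step Rs) .unit P) (e : Deriv (Step Rs) .unit Q) :
    Deriv (Step Rs) .unit (.par P Q) :=
  e.trans ((d.fill (.parL .hole Q)).equiv_trans (Equiv.unit_par Q).symm)

lemma Deriv.cop (d : Deriv (Step Rs) .unit P) (e : Deriv (Step Rs) .unit Q) :
    Deriv (Step Rs) .unit (.cop P Q) :=
  e.trans ((d.fill (.copL .hole Q)).equiv_trans (Equiv.unit_cop Q).symm)

end Derivations

/-! ### From MLL+mix to LBV -/

lemma DerivLBV.switch (P Q R : St) : DerivLBV (.cop P (.par Q R)) (.par (.cop P Q) R) :=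
  .of_rootStep (.inr rfl) (.s P Q R)

lemma ProofLBV.atom_interaction {A : St} (h : A.isAtom) : ProofLBV (.par A A.negS) :=
  .of_rootStep (.inl rfl) (.aiDown A h)

lemma ProofLBV.of_equiv {P Q : St} (d : ProofLBV P) (h : Equiv P Q) : ProofLBV Q :=
  Deriv.trans_equiv d h

lemma DerivLBV.switch_left (P Q R : St) : DerivLBV (.cop (.par P Q) R) (.par (.cop P R) Q) :=
  Deriv.equiv_trans (.copComm _ _)
    (Deriv.trans_equiv (DerivLBV.switch R P Q) (.parCongr (.copComm R P) (.refl Q)))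

lemma ProofLBV.tensor {P Q Γ Δ : St} (d : ProofLBV (.par P Γ)) (e : ProofLBV (.par Q Δ)) :
    ProofLBV (.par (.cop P Q) (.par Γ Δ)) := by
  have outer : ProofLBV (.par (.cop (.par P Γ) Q) Δ) :=
    (Deriv.cop d e).trans (DerivLBV.switch _ Q Δ)
  have inner : DerivLBV (.par (.cop (.par P Γ) Q) Δ) (.par (.par (.cop P Q) Γ) Δ) :=
    (DerivLBV.switch_left P Γ Q).fill (.parL .hole Δ)
  exact (Deriv.trans outer inner).trans_equiv (.parAssoc _ _ _)

lemma ProofLBV.interaction (P : MF) : ProofLBV (.par P.toSt P.neg.toSt) := by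
  induction P with
  | pos a => exact atom_interaction (A := .pos a) trivial
  | negA a => exact atom_interaction (A := .neg a) trivial
  | tensor P Q ihP ihQ => exact ihP.tensor ihQ
  | parr P Q ihP ihQ =>
    exact ((ihP.of_equiv (.parComm _ _)).tensor (ihQ.of_equiv (.parComm _ _))).of_equiv
      (.parComm _ _)

/-- The translation of a sequent into the par of its formulas, with `◦` at the end of the list. -/
def seqToSt (Γ : List MF) : St := Γ.foldr (fun P R => .par P.toSt R) .unit

lemma seqToSt_append (Γ Δ : List MF) :
    Equiv (seqToSt (Γ ++ Δ)) (.par (seqToSt Γ) (seqToSt Δ)) := by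
  induction Γ with
  | nil => exact (Equiv.unit_par _).symm
  | cons P Γ ih => exact (Equiv.parCongr (.refl _) ih).trans (Equiv.parAssoc _ _ _).symm

lemma seqToSt_perm {Γ Δ : List MF} (h : Γ.Perm Δ) : Equiv (seqToSt Γ) (seqToSt Δ) := by
  induction h with
  | nil => exact .refl _
  | cons P _ ih => exact .parCongr (.refl _) ih
  | swap P Q Γ => exact .par_left_comm _ _ _
  | trans _ _ ih₁ ih₂ => exact ih₁.trans ih₂

lemma MProof.proofLBV {Γ : List MF} (h : MProof Γ) : ProofLBV (seqToSt Γ) := by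
  induction h with
  | id P => exact (ProofLBV.interaction P).of_equiv (.parCongr (.refl _) (Equiv.parUnit _).symm)
  | perm Γ Δ P Q _ ih => exact ih.of_equiv (seqToSt_perm ((List.Perm.swap Q P Δ).append_left Γ))
  | tensor Γ Δ P Q _ _ ihP ihQ =>
    have hP : ProofLBV (seqToSt (P :: Γ)) :=
      ihP.of_equiv (seqToSt_perm (List.perm_append_singleton P Γ))
    exact ((hP.tensor ihQ).of_equiv (.parCongr (.refl _) (seqToSt_append Γ Δ).symm)).of_equiv
      (seqToSt_perm (List.perm_append_singleton (P.tensor Q) (Γ ++ Δ)).symm)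
  | parr Γ P Q _ ih =>
    have hPQ : ProofLBV (seqToSt (P :: Q :: Γ)) := ih.of_equiv (seqToSt_perm List.perm_append_comm)
    exact (hPQ.of_equiv (Equiv.parAssoc _ _ _).symm).of_equiv
      (seqToSt_perm (List.perm_append_singleton (P.parr Q) Γ).symm)
  | mix Γ Δ _ _ ihΓ ihΔ => exact (Deriv.par ihΓ ihΔ).trans_equiv (seqToSt_append Γ Δ).symm

/-! ### Phase spaces -/

section PhaseSpace

variable {M : Type*} [AddCommMonoid M]

section Orthogonality

/-- The orthogonal `Xᗮ` of a set `X` in the phase space `M` with pole `S`. The facts of phase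
semantics are the sets of the form `orth S X`, that is, those equal to their biorthogonal. -/
def orth (S X : Set M) : Set M := {x | ∀ y ∈ X, x + y ∈ S}

variable {S X Y Z : Set M}

lemma subset_orth_iff : X ⊆ orth S Y ↔ X + Y ⊆ S := Set.add_subset_iff.symm

lemma orth_add_subset : orth S X + X ⊆ S := subset_orth_iff.1 subset_rfl

lemma subset_orth_comm : X ⊆ orth S Y ↔ Y ⊆ orth S X := by
  rw [subset_orth_iff, subset_orth_iff, add_comm]

lemma subset_orth_orth : X ⊆ orth S (orth S X) := subset_orth_comm.1 subset_rfl

lemma orth_anti (h : X ⊆ Y) : orth S Y ⊆ orth S X :=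
  subset_orth_comm.1 (h.trans subset_orth_orth)

lemma orth_orth_mono (h : X ⊆ Y) : orth S (orth S X) ⊆ orth S (orth S Y) :=
  orth_anti (orth_anti h)

lemma orth_orth_orth : orth S (orth S (orth S X)) = orth S X :=
  (orth_anti subset_orth_orth).antisymm subset_orth_orth

lemma orth_orth_subset_orth_iff : orth S (orth S X) ⊆ orth S Y ↔ X ⊆ orth S Y := by
  rw [subset_orth_comm, orth_orth_orth, subset_orth_comm]

lemma subset_orth_add_iff : X ⊆ orth S (Y + Z) ↔ X + Y ⊆ orth S Z := by
  rw [subset_orth_iff, subset_orth_iff, add_assoc]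

lemma orth_add_orth_orth : orth S (X + orth S (orth S Y)) = orth S (X + Y) :=
  eq_of_forall_le_iff fun W => by simp only [subset_orth_add_iff, orth_orth_orth]

lemma orth_orth_orth_add : orth S (orth S (orth S X) + Y) = orth S (X + Y) := by
  rw [add_comm, orth_add_orth_orth, add_comm]

lemma add_orth_add_subset : X + orth S (X + Y) ⊆ orth S Y := by
  rw [add_comm, ← subset_orth_add_iff]

lemma orth_zero : orth S 0 = S := by
  ext x
  simp [orth]

end Orthogonality

variable (S : AddSubmonoid M)

lemma orth_coe_self : orth (S : Set M) S = S :=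
  Set.Subset.antisymm (fun x hx => by simpa using hx 0 S.zero_mem)
    fun _ hx _ hy => S.add_mem hx hy

lemma orth_add_coe (X : Set M) : orth (S : Set M) (X + S) = orth S X := by
  have biorth_zero : orth (S : Set M) (orth S 0) = S := by rw [orth_zero, orth_coe_self]
  calc orth (S : Set M) (X + S)
      = orth S (X + orth S (orth S 0)) := by rw [biorth_zero]
    _ = orth S X := by rw [orth_add_orth_orth, add_zero]

lemma orth_orth_subset_coe_iff {X : Set M} : orth (S : Set M) (orth S X) ⊆ S ↔ X ⊆ S := by
  simpa only [orth_coe_self] using orth_orth_subset_orth_iff (S := (S : Set M)) (X := X) (Y := S)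

/-- The denotation of structures in the phase space with pole `S`. The atom `a` denotes the
orthogonal of `v a`, so that it is a fact for an arbitrary `v`; copar and par denote the tensor and
par of phase semantics, and `◦` the pole, which is the unit of both. -/
def interp (v : ℕ → Set M) : St → Set M
  | .unit => S
  | .pos a => orth S (v a)
  | .neg a => orth S (orth S (v a))
  | .par P Q => orth S (orth S (interp v P) + orth S (interp v Q))
  | .cop P Q => orth S (orth S (interp v P + interp v Q))

variable {S} {v : ℕ → Set M}

lemma orth_orth_interp (P : St) : orth S (orth S (interp S v P)) = interp S v P := by
  cases P with
  | unit => simp only [interp, orth_coe_self]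
  | _ => exact orth_orth_orth

lemma interp_negS (P : St) : interp S v P.negS = orth S (interp S v P) := by
  induction P with
  | unit => exact (orth_coe_self S).symm
  | pos a => rfl
  | neg a => exact orth_orth_orth.symm
  | par P Q ihP ihQ => simp only [St.negS, interp, ihP, ihQ]
  | cop P Q ihP ihQ =>
    simp only [St.negS, interp, ihP, ihQ, orth_orth_interp, orth_orth_orth]

lemma interp_eq_of_equiv {P Q : St} (h : Equiv P Q) : interp S v P = interp S v Q := by
  induction h with
  | refl => rfl
  | symm _ ih => exact ih.symm
  | trans _ _ ih₁ ih₂ => exact ih₁.trans ih₂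
  | parComm | copComm => simp only [interp, add_comm]
  | parAssoc | copAssoc =>
    simp only [interp, orth_orth_orth_add, orth_add_orth_orth, add_assoc]
  | parUnit => simp only [interp, orth_coe_self, orth_add_coe, orth_orth_interp]
  | copUnit => simp only [interp, orth_add_coe, orth_orth_interp]
  | parCongr _ _ ih₁ ih₂ | copCongr _ _ ih₁ ih₂ => simp only [interp, ih₁, ih₂]

lemma interp_fill_mono {P Q : St} (h : interp S v P ⊆ interp S v Q) (C : Ctx) :
    interp S v (C.fill P) ⊆ interp S v (C.fill Q) := by
  induction C with
  | hole => exact h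
  | parL C R ih => exact orth_anti (Set.add_subset_add_right (orth_anti ih))
  | parR R C ih => exact orth_anti (Set.add_subset_add_left (orth_anti ih))
  | copL C R ih => exact orth_orth_mono (Set.add_subset_add_right ih)
  | copR R C ih => exact orth_orth_mono (Set.add_subset_add_left ih)

lemma interp_unit_subset_par_negS (P : St) :
    interp S v .unit ⊆ interp S v (.par P P.negS) := by
  simp only [interp, interp_negS]
  rw [subset_orth_comm, orth_coe_self, add_comm]
  exact orth_add_subset

lemma interp_cop_negS_subset_unit (P : St) :
    interp S v (.cop P P.negS) ⊆ interp S v .unit := by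
  simp only [interp, interp_negS]
  rw [orth_orth_subset_coe_iff, add_comm]
  exact orth_add_subset

lemma interp_switch (P Q R : St) :
    interp S v (.cop P (.par Q R)) ⊆ interp S v (.par (.cop P Q) R) := by
  simp only [interp, orth_orth_orth]
  rw [orth_orth_subset_orth_iff, subset_orth_iff]
  set p := interp S v P
  set q := interp S v Q
  set r := interp S v R
  calc p + orth S (orth S q + orth S r) + (orth S (p + q) + orth S r)
      = orth S (orth S q + orth S r) + (p + orth S (p + q) + orth S r) := by abel
    _ ⊆ orth S (orth S q + orth S r) + (orth S q + orth S r) :=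
      Set.add_subset_add_left (Set.add_subset_add_right add_orth_add_subset)
    _ ⊆ S := orth_add_subset

lemma interp_subset_of_rootStep {r : Rule} {P Q : St} (h : RootStep r P Q) :
    interp S v P ⊆ interp S v Q := by
  cases h with
  | aiDown A => exact interp_unit_subset_par_negS A
  | aiUp A => exact interp_cop_negS_subset_unit A
  | s P Q R => exact interp_switch P Q R

lemma interp_subset_of_deriv {Rs : Set Rule} {P Q : St} (d : Deriv (Step Rs) P Q) :
    interp S v P ⊆ interp S v Q := by
  induction d with
  | eqv h => exact (interp_eq_of_equiv h).subset
  | step s _ ih =>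
    obtain ⟨r, -, C, P', Q', hroot, hP, hQ⟩ := s
    refine subset_trans ?_ ih
    rw [interp_eq_of_equiv hP, ← interp_eq_of_equiv hQ]
    exact interp_fill_mono (interp_subset_of_rootStep hroot) C

end PhaseSpace

/-! ### The phase space of sequents -/

lemma MProof.of_perm {Γ Δ : List MF} (h : Γ.Perm Δ) (hΓ : MProof Γ) : MProof Δ := by
  -- The induction has to carry along the formulas to the left of the permuted part.
  suffices append_left : ∀ Λ, MProof (Λ ++ Γ) → MProof (Λ ++ Δ) from append_left [] hΓ
  clear hΓ
  induction h with
  | nil => exact fun _ h => h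
  | cons P _ ih => exact fun Λ h => by simpa using ih (Λ ++ [P]) (by simpa using h)
  | swap P Q Γ => exact fun Λ h => .perm Λ Γ Q P h
  | trans _ _ ih₁ ih₂ => exact fun Λ h => ih₂ Λ (ih₁ Λ h)

/-- The pole of the phase space of sequents: the provable sequents, together with the empty sequent,
which is the unit of mix but has no proof. -/
def provableSequents : AddSubmonoid (Multiset MF) where
  carrier := {x | ∃ Γ : List MF, (Γ : Multiset MF) = x ∧ (Γ = [] ∨ MProof Γ)}
  zero_mem' := ⟨[], rfl, .inl rfl⟩
  add_mem' := by
    rintro _ _ ⟨Γ, rfl, rfl | hΓ⟩ ⟨Δ, rfl, rfl | hΔ⟩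
    · exact ⟨[], rfl, .inl rfl⟩
    · exact ⟨Δ, rfl, .inr hΔ⟩
    · exact ⟨Γ, by simp, .inr hΓ⟩
    · exact ⟨Γ ++ Δ, rfl, .inr (.mix Γ Δ hΓ hΔ)⟩

lemma coe_mem_provableSequents {Γ : List MF} (hΓ : Γ ≠ []) :
    (Γ : Multiset MF) ∈ provableSequents ↔ MProof Γ := by
  refine ⟨?_, fun h => ⟨Γ, rfl, .inr h⟩⟩
  rintro ⟨Δ, hΔ, rfl | h⟩
  · exact absurd (Multiset.coe_eq_coe.1 hΔ).nil_eq.symm hΓ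
  · exact h.of_perm (Multiset.coe_eq_coe.1 hΔ)

/-- The fact of all sequents `Γ` such that `⊢ Γ, P` is provable. -/
def contextsProving (P : MF) : Set (Multiset MF) := orth provableSequents {{P}}

lemma coe_mem_contextsProving {Γ : List MF} {P : MF} :
    (Γ : Multiset MF) ∈ contextsProving P ↔ MProof (Γ ++ [P]) := by
  rw [← coe_mem_provableSequents (by simp), ← Multiset.coe_add]
  simp [contextsProving, orth]

lemma contextsProving_add_subset_tensor (P Q : MF) :
    contextsProving P + contextsProving Q ⊆ contextsProving (P.tensor Q) := by
  rintro _ ⟨⟨Γ⟩, hΓ, ⟨Δ⟩, hΔ, rfl⟩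
  have hP : MProof (Γ ++ [P]) := coe_mem_contextsProving.1 hΓ
  have hQ : MProof (Q :: Δ) :=
    (coe_mem_contextsProving.1 hΔ).of_perm (List.perm_append_singleton Q Δ)
  exact coe_mem_contextsProving.2 (.tensor Γ Δ P Q hP hQ)

lemma orth_add_subset_contextsProving_parr (P Q : MF) :
    orth provableSequents ({{P}} + {{Q}}) ⊆ contextsProving (P.parr Q) := by
  rintro ⟨Γ⟩ hΓ
  have hPQ : MProof (Γ ++ [P, Q]) :=
    (coe_mem_provableSequents (by simp)).1 (hΓ _ (Set.add_mem_add rfl rfl))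
  exact coe_mem_contextsProving.2 (.parr Γ P Q hPQ)

/-- The denotation of structures in the phase space of sequents, where the atom `a` denotes
`contextsProving a`. -/
def seqInterp : St → Set (Multiset MF) := interp provableSequents fun a => {{.pos a}}

lemma seqInterp_subset_contextsProving {P : St} (h : P.unitFree) :
    seqInterp P ⊆ contextsProving P.toMF := by
  induction P with
  | unit => exact h.elim
  | pos a => exact subset_rfl
  | neg a =>
    refine orth_orth_subset_orth_iff.2 (Set.singleton_subset_iff.2 ?_)
    exact coe_mem_contextsProving.2 (.id (.pos a))
  | par P Q ihP ihQ =>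
    refine subset_trans (orth_anti (Set.add_subset_add ?_ ?_))
      (orth_add_subset_contextsProving_parr P.toMF Q.toMF)
    · exact subset_orth_comm.1 (ihP h.1)
    · exact subset_orth_comm.1 (ihQ h.2)
  | cop P Q ihP ihQ =>
    exact orth_orth_subset_orth_iff.2
      ((Set.add_subset_add (ihP h.1) (ihQ h.2)).trans (contextsProving_add_subset_tensor _ _))

lemma MProof.of_deriv {Rs : Set Rule} {P : St} (hP : P.unitFree) (d : Deriv (Step Rs) .unit P) :
    MProof [P.toMF] := by
  have zero_mem : (0 : Multiset MF) ∈ seqInterp P :=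
    interp_subset_of_deriv d provableSequents.zero_mem
  exact coe_mem_contextsProving.1 (seqInterp_subset_contextsProving hP zero_mem)

theorem lbv_mll_equiv_general :
    (∀ P : MF, MProof [P] → ProofLBV P.toSt) ∧
    (∀ (Rs : Set Rule) (P : St), P.unitFree → Deriv (Step Rs) .unit P → MProof [P.toMF]) :=
  ⟨fun _ h => h.proofLBV.of_equiv (.parUnit _), fun _ _ hP d => .of_deriv hP d⟩

/-- Equivalence of LBV and MLL+mix.
(i) If the sequent `⊢ P` is provable in MLL+mix, then the structure `⟨P⟩` is
provable in LBV.  (ii) If a structure `P` in normal form with `P ≠ ◦` is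
provable in LBV, then the sequent `⊢ ⌊P⌋` is provable in MLL+mix. -/
theorem lbv_mll_equiv :
    (∀ P : MF, MProof [P] → ProofLBV P.toSt) ∧
    (∀ P : St, P.unitFree → ProofLBV P → MProof [P.toMF]) :=
  ⟨lbv_mll_equiv_general.1, lbv_mll_equiv_general.2 LBVRules⟩

end LBV
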